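/- Let 1 ≤ i ≤ 6 and let X₁, X₂ ⊆ A^ℤ be subshifts with f_i(X₁) = X₂ (image of the set X₁ under f_i). Then the one-sided subshifts φ(X₁) and φ(X₂) are topologically conjugate: there exists a homeomorphism h : φ(X₁) → φ(X₂) with h ∘ S = S ∘ h. -/

import Mathlib

/-!
The map `f i` is an involution of `A^ℤ`: it exchanges `a i` and `ta i` in front of the symbols of a
set `trig i` which contains neither of them and whose occurrences it therefore preserves.

It remains to transport `f i` through the coding, i.e. to find a sliding block code `H` with
`H (rhoPlus x) = rhoPlus (f i x)`; such an `H` is continuous and shift-commuting on all of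
`{0,1}^ℕ`, and being inverted on `phi X₂` by itself it restricts to the conjugacy.
A block code exists as soon as the letter of `rhoPlus (f i x)` at place `n` is determined by the
letters of `rhoPlus x` at the places `n, …, n + 65` (`window_determines`). Two facts give this.

* The phase `n % 22` can be read off: an isolated `0` (the word `101`) occurs exactly once in each
  code word, at place 1 of the words of `a j`, `ta j` and then followed by `0`, and at place 9 of
  the word of `#` and then followed by `1` (`marker_a`, `marker_hash`). Once the phase is
  known, the next symbol of `x` is known too.
* The code words of `a i` and `ta i` differ only at places 6 and 7, while the letters at the places
  `7, …, 21` determine the symbol. So, if the window starts at phase at least 8, the application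
  of `f i` does not alter the first letter, and otherwise the current symbol is known as well.
-/

/-- The alphabet: 13 symbols, `a i` for `1 ≤ i ≤ 6` are positions `0..5`,
`ta i` (the tilde symbols) are positions `6..11`, and `hash` is position `12`. -/
abbrev A : Type := Fin 13

def a (i : ℕ) : A := if h : 1 ≤ i ∧ i ≤ 6 then ⟨i - 1, by omega⟩ else ⟨0, by omega⟩

def ta (i : ℕ) : A := if h : 1 ≤ i ∧ i ≤ 6 then ⟨i + 5, by omega⟩ else ⟨0, by omega⟩

def hash : A := ⟨12, by omega⟩

/-- The two-sided shift. -/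
def shiftZ {B : Type*} (x : ℤ → B) : ℤ → B := fun n => x (n + 1)

/-- The one-sided shift. -/
def shift1 {B : Type*} (x : ℕ → B) : ℕ → B := fun n => x (n + 1)

open Classical in
/-- The map `g i : A × A → A`. -/
noncomputable def g (i : ℕ) (b c : A) : A :=
  if b = a i ∧ (c = hash ∨ ∃ j : ℕ, (if i ≤ 3 then 1 else 4) ≤ j ∧
      j ≤ (if i ≤ 3 then 3 else 6) ∧ j ≠ i ∧ c = a j) then ta i
  else if b = ta i ∧ (c = hash ∨ ∃ j : ℕ, (if i ≤ 3 then 1 else 4) ≤ j ∧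
      j ≤ (if i ≤ 3 then 3 else 6) ∧ j ≠ i ∧ c = a j) then a i
  else b

/-- The map `f i : A^ℤ → A^ℤ`, `f i x k = g i (x k) (x (k+1))`. -/
noncomputable def f (i : ℕ) : (ℤ → A) → (ℤ → A) := fun x k => g i (x k) (x (k + 1))

/-- A (two-sided) subshift: nonempty, closed and shift-invariant. -/
def IsSubshift {B : Type*} [TopologicalSpace B] (X : Set (ℤ → B)) : Prop :=
  X.Nonempty ∧ IsClosed X ∧ shiftZ '' X = X

/-- The cylinder `[#w#]`. -/
def cyl (w : List A) : Set (ℤ → A) :=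
  {x | x 0 = hash ∧ (∀ k : ℕ, k < w.length → x (1 + (k : ℤ)) = w.getD k hash) ∧
    x (1 + (w.length : ℤ)) = hash}

/-- The word map `f i *` representing `f i`. -/
noncomputable def fstar (i : ℕ) : List A → List A
  | [] => []
  | [b] => [g i b hash]
  | b :: c :: rest => g i b c :: fstar i (c :: rest)

/-- Composition `f_{l₀} ∘ f_{l₁} ∘ ⋯`. -/
noncomputable def fcomp (l : List ℕ) : (ℤ → A) → (ℤ → A) :=
  l.foldr (fun i F => f i ∘ F) id

/-- The binary code word of length 22 associated to each symbol. -/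
def rhoWord (s : A) : List Bool :=
  if (s : ℕ) < 6 then
    [true, true, false, true, false, false] ++ List.replicate (2 * (6 - (s : ℕ))) false
      ++ [true, true] ++ List.replicate (2 * ((s : ℕ) + 1)) false
  else if (s : ℕ) < 12 then
    [true, true, false, true, false, false, true, true]
      ++ List.replicate (2 * (11 - (s : ℕ))) false
      ++ [true, true] ++ List.replicate (2 * ((s : ℕ) - 5)) false
  else List.replicate 10 true ++ [false, true] ++ List.replicate 10 true

/-- `rho s r` is the `r`-th letter of the code word of `s`. -/
def rho (s : A) (r : ℕ) : Bool := (rhoWord s).getD r false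

/-- `ρ⁺(x)` : the concatenation `ρ(x 0) ρ(x 1) ρ(x 2) ⋯`. -/
def rhoPlus (x : ℤ → A) : ℕ → Bool := fun n => rho (x ((n / 22 : ℕ) : ℤ)) (n % 22)

/-- `φ(X) = ⋃_{0 ≤ n < 22} Sⁿ({ρ⁺(x) : x ∈ X})`. -/
def phi (X : Set (ℤ → A)) : Set (ℕ → Bool) :=
  ⋃ n < 22, shift1^[n] '' (rhoPlus '' X)

/-! ### The involution -/

/-- The transposition of `a i` and `ta i`. -/
def swp (i : ℕ) (b : A) : A := if b = a i then ta i else if b = ta i then a i else b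

/-- The symbols `c` in front of which `f i` exchanges `a i` and `ta i`. -/
def trig (i : ℕ) (c : A) : Prop :=
  c = hash ∨ ∃ j : ℕ, (if i ≤ 3 then 1 else 4) ≤ j ∧
      j ≤ (if i ≤ 3 then 3 else 6) ∧ j ≠ i ∧ c = a j

open Classical in
theorem g_eq (i : ℕ) (b c : A) : g i b c = if trig i c then swp i b else b := by
  by_cases h : trig i c
  · rw [if_pos h]
    unfold trig at h
    simp only [g, swp, h, and_true]
  · rw [if_neg h]
    unfold trig at h
    simp only [g, h, and_false, if_false]

theorem swp_swp {i : ℕ} (h1 : 1 ≤ i) (h2 : i ≤ 6) (b : A) : swp i (swp i b) = b := by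
  interval_cases i <;> revert b <;> decide

theorem swp_of_trig {i : ℕ} (h1 : 1 ≤ i) (h2 : i ≤ 6) {c : A} (h : trig i c) : swp i c = c := by
  rcases h with rfl | ⟨j, hj1, hj2, hne, rfl⟩
  · interval_cases i <;> decide
  · have hj3 : 1 ≤ j := by split_ifs at hj1 <;> omega
    have hj4 : j ≤ 6 := by split_ifs at hj2 <;> omega
    clear hj1 hj2
    interval_cases i <;> interval_cases j <;> first | exact absurd rfl hne | decide

theorem trig_g {i : ℕ} (h1 : 1 ≤ i) (h2 : i ≤ 6) (c d : A) : trig i (g i c d) ↔ trig i c := by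
  rw [g_eq]
  split_ifs
  · constructor
    · intro h
      have h3 := swp_of_trig h1 h2 h
      rw [swp_swp h1 h2] at h3
      rwa [← h3] at h
    · intro h
      rwa [swp_of_trig h1 h2 h]
  · rfl

theorem f_f {i : ℕ} (h1 : 1 ≤ i) (h2 : i ≤ 6) (x : ℤ → A) : f i (f i x) = x := by
  funext k
  simp only [f]
  rw [g_eq i (g i _ _), g_eq i (x k)]
  by_cases h : trig i (x (k + 1)) <;> simp [trig_g h1 h2, h, swp_swp h1 h2]

/-! ### Finite properties of the code words -/

/-- The letter at place `n` of the infinite word `ρ(b) ρ(c) 000⋯`. -/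
def two (b c : A) (n : ℕ) : Bool := if n < 22 then rho b n else rho c (n - 22)

theorem marker_a_fin : ∀ b c : A, ∀ r < 22,
    (two b c r = true ∧ two b c (r + 1) = false ∧ two b c (r + 2) = true ∧
      two b c (r + 3) = false) ↔ (r = 1 ∧ b ≠ hash) := by
  decide +kernel

theorem marker_hash_fin : ∀ b c : A, ∀ r < 22,
    (two b c r = true ∧ two b c (r + 1) = false ∧ two b c (r + 2) = true ∧
      two b c (r + 3) = true) ↔ (r = 9 ∧ b = hash) := by
  decide +kernel

theorem rho_suffix_inj : ∀ b b' : A, (∀ s < 22, 7 ≤ s → rho b s = rho b' s) → b = b' := by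
  decide +kernel

theorem rho_swp {i : ℕ} (h1 : 1 ≤ i) (h2 : i ≤ 6) :
    ∀ b : A, ∀ r < 22, 8 ≤ r → rho (swp i b) r = rho b r := by
  interval_cases i <;> decide +kernel

/-! ### Recognizability -/

theorem rhoPlus_add (x : ℤ → A) (n m : ℕ) (h : n % 22 + m < 44) :
    rhoPlus x (n + m) =
      two (x ((n / 22 : ℕ) : ℤ)) (x (((n / 22 : ℕ) : ℤ) + 1)) (n % 22 + m) := by
  unfold rhoPlus two
  split_ifs with h3
  · have e1 : (n + m) / 22 = n / 22 := by omega
    have e2 : (n + m) % 22 = n % 22 + m := by omega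
    rw [e1, e2]
  · have e1 : (n + m) / 22 = n / 22 + 1 := by omega
    have e2 : (n + m) % 22 = n % 22 + m - 22 := by omega
    rw [e1, e2]
    push_cast
    rfl

theorem marker_a (x : ℤ → A) (n : ℕ) :
    (rhoPlus x n = true ∧ rhoPlus x (n + 1) = false ∧ rhoPlus x (n + 2) = true ∧
      rhoPlus x (n + 3) = false) ↔ (n % 22 = 1 ∧ x ((n / 22 : ℕ) : ℤ) ≠ hash) := by
  have hr : n % 22 < 22 := Nat.mod_lt _ (by norm_num)
  have h0 := rhoPlus_add x n 0 (by omega)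
  rw [Nat.add_zero, Nat.add_zero] at h0
  rw [h0, rhoPlus_add x n 1 (by omega), rhoPlus_add x n 2 (by omega),
    rhoPlus_add x n 3 (by omega)]
  exact marker_a_fin _ _ _ hr

theorem marker_hash (x : ℤ → A) (n : ℕ) :
    (rhoPlus x n = true ∧ rhoPlus x (n + 1) = false ∧ rhoPlus x (n + 2) = true ∧
      rhoPlus x (n + 3) = true) ↔ (n % 22 = 9 ∧ x ((n / 22 : ℕ) : ℤ) = hash) := by
  have hr : n % 22 < 22 := Nat.mod_lt _ (by norm_num)
  have h0 := rhoPlus_add x n 0 (by omega)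
  rw [Nat.add_zero, Nat.add_zero] at h0
  rw [h0, rhoPlus_add x n 1 (by omega), rhoPlus_add x n 2 (by omega),
    rhoPlus_add x n 3 (by omega)]
  exact marker_hash_fin _ _ _ hr

/-- A window of length 66 of a coded point determines its phase. -/
theorem phase_eq (x x' : ℤ → A) (n n' : ℕ)
    (h : ∀ m < 66, rhoPlus x (n + m) = rhoPlus x' (n' + m)) : n % 22 = n' % 22 := by
  have hr : n % 22 < 22 := Nat.mod_lt _ (by norm_num)
  -- `n + (22 - n % 22)` is the beginning of the next code word.
  by_cases hx : x ((n / 22 + 1 : ℕ) : ℤ) = hash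
  · obtain ⟨m, hm⟩ : ∃ m, m = 22 - n % 22 + 9 := ⟨_, rfl⟩
    have e : (n + m) / 22 = n / 22 + 1 := by omega
    have h3 := (marker_hash x (n + m)).2 ⟨by omega, by rw [e]; exact hx⟩
    simp only [Nat.add_assoc] at h3
    rw [h m (by omega), h (m + 1) (by omega), h (m + 2) (by omega), h (m + 3) (by omega)] at h3
    have h4 := ((marker_hash x' (n' + m)).1 h3).1
    omega
  · obtain ⟨m, hm⟩ : ∃ m, m = 22 - n % 22 + 1 := ⟨_, rfl⟩
    have e : (n + m) / 22 = n / 22 + 1 := by omega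
    have h3 := (marker_a x (n + m)).2 ⟨by omega, by rw [e]; exact hx⟩
    simp only [Nat.add_assoc] at h3
    rw [h m (by omega), h (m + 1) (by omega), h (m + 2) (by omega), h (m + 3) (by omega)] at h3
    have h4 := ((marker_a x' (n' + m)).1 h3).1
    omega

/-- The letter of `rhoPlus (f i x)` at place `n` is determined by the window of length 66 of
`rhoPlus x` starting at `n`. -/
theorem window_determines {i : ℕ} (h1 : 1 ≤ i) (h2 : i ≤ 6) (x x' : ℤ → A) (n n' : ℕ)
    (h : ∀ m < 66, rhoPlus x (n + m) = rhoPlus x' (n' + m)) :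
    rhoPlus (f i x) n = rhoPlus (f i x') n' := by
  have hp := phase_eq x x' n n' h
  have hr : n % 22 < 22 := Nat.mod_lt _ (by norm_num)
  have key : ∀ s < 44, n % 22 ≤ s →
      two (x ((n / 22 : ℕ) : ℤ)) (x (((n / 22 : ℕ) : ℤ) + 1)) s =
        two (x' ((n' / 22 : ℕ) : ℤ)) (x' (((n' / 22 : ℕ) : ℤ) + 1)) s := by
    intro s hs hns
    have h3 := h (s - n % 22) (by omega)
    rw [rhoPlus_add x _ _ (by omega), rhoPlus_add x' _ _ (by omega), ← hp,
      Nat.add_sub_cancel' hns] at h3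
    exact h3
  have hlow : ∀ s < 22, n % 22 ≤ s →
      rho (x ((n / 22 : ℕ) : ℤ)) s = rho (x' ((n' / 22 : ℕ) : ℤ)) s := by
    intro s hs hns
    simpa [two, hs] using key s (by omega) hns
  have hnext : x (((n / 22 : ℕ) : ℤ) + 1) = x' (((n' / 22 : ℕ) : ℤ) + 1) := by
    apply rho_suffix_inj
    intro s hs _
    simpa [two] using key (s + 22) (by omega) (by omega)
  simp only [rhoPlus, f]
  rw [← hp, hnext]
  by_cases h8 : 8 ≤ n % 22
  · rw [g_eq, g_eq]
    split_ifs
    · rw [rho_swp h1 h2 _ _ hr h8, rho_swp h1 h2 _ _ hr h8]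
      exact hlow _ hr le_rfl
    · exact hlow _ hr le_rfl
  · rw [rho_suffix_inj _ _ fun s hs h7 => hlow s hs (by omega)]

/-! ### The sliding block code -/

theorem exists_block_code {i : ℕ} (h1 : 1 ≤ i) (h2 : i ≤ 6) :
    ∃ H : (ℕ → Bool) → (ℕ → Bool), Continuous H ∧ (∀ y, H (shift1 y) = shift1 (H y)) ∧
      ∀ x, H (rhoPlus x) = rhoPlus (f i x) := by
  let win : (ℤ → A) × ℕ → (Fin 66 → Bool) := fun p m => rhoPlus p.1 (p.2 + m)
  let out : (ℤ → A) × ℕ → Bool := fun p => rhoPlus (f i p.1) p.2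
  have hfac : out.FactorsThrough win := by
    rintro ⟨x, n⟩ ⟨x', n'⟩ h
    exact window_determines h1 h2 x x' n n' fun m hm => congrFun h ⟨m, hm⟩
  let c : (Fin 66 → Bool) → Bool := Function.extend win out fun _ => false
  have hc : ∀ p, c (win p) = out p := fun p => hfac.extend_apply _ p
  refine ⟨fun y n => c fun m => y (n + m), ?_, ?_, ?_⟩
  · refine continuous_pi fun n => ?_
    have hcc : Continuous c := continuous_of_discreteTopology
    exact hcc.comp (continuous_pi fun m => continuous_apply _)
  · intro y
    funext n
    simp only [shift1]
    congr 1
    funext m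
    congr 1
    omega
  · intro x
    funext n
    exact hc (x, n)

theorem maps_phi {i : ℕ} {H : (ℕ → Bool) → (ℕ → Bool)}
    (hs : ∀ y, H (shift1 y) = shift1 (H y)) (hH : ∀ x, H (rhoPlus x) = rhoPlus (f i x))
    {X X' : Set (ℤ → A)} (hX : Set.MapsTo (f i) X X') : Set.MapsTo H (phi X) (phi X') := by
  intro y hy
  simp only [phi, Set.mem_iUnion] at hy ⊢
  obtain ⟨n, hn, _, ⟨x, hx, rfl⟩, rfl⟩ := hy
  refine ⟨n, hn, rhoPlus (f i x), ⟨f i x, hX hx, rfl⟩, ?_⟩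
  rw [(Function.Commute.iterate_right (show Function.Commute H shift1 from hs) n).eq, hH]

theorem block_code_involutive {i : ℕ} (h1 : 1 ≤ i) (h2 : i ≤ 6) {H : (ℕ → Bool) → (ℕ → Bool)}
    (hs : ∀ y, H (shift1 y) = shift1 (H y)) (hH : ∀ x, H (rhoPlus x) = rhoPlus (f i x))
    {X : Set (ℤ → A)} {y : ℕ → Bool} (hy : y ∈ phi X) : H (H y) = y := by
  simp only [phi, Set.mem_iUnion] at hy
  obtain ⟨n, hn, _, ⟨x, hx, rfl⟩, rfl⟩ := hy
  have hcomm := Function.Commute.iterate_right (show Function.Commute H shift1 from hs) n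
  rw [hcomm.eq, hcomm.eq, hH, hH, f_f h1 h2]


/-- If `1 ≤ i ≤ 6` and `X₁, X₂` are subshifts with `f i '' X₁ = X₂`, then the
one-sided subshifts `φ(X₁)` and `φ(X₂)` are topologically conjugate. -/
theorem stmt14 (i : ℕ) (h1 : 1 ≤ i) (h2 : i ≤ 6)
    (X₁ X₂ : Set (ℤ → A)) (hX₁ : IsSubshift X₁) (hX₂ : IsSubshift X₂)
    (hf : f i '' X₁ = X₂) :
    ∃ h : ↥(phi X₁) ≃ₜ ↥(phi X₂),
      ∀ (y : ↥(phi X₁)) (hy : shift1 (y : ℕ → Bool) ∈ phi X₁),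
        (h ⟨shift1 (y : ℕ → Bool), hy⟩ : ℕ → Bool) = shift1 (h y : ℕ → Bool) := by
  obtain ⟨H, hcont, hs, hH⟩ := exists_block_code h1 h2
  have m12 : Set.MapsTo (f i) X₁ X₂ := fun x hx => hf ▸ Set.mem_image_of_mem _ hx
  have m21 : Set.MapsTo (f i) X₂ X₁ := by
    rw [← hf]
    rintro _ ⟨x, hx, rfl⟩
    rwa [f_f h1 h2]
  have M12 := maps_phi hs hH m12
  have M21 := maps_phi hs hH m21
  exact ⟨{  toFun := M12.restrict
            invFun := M21.restrict
            left_inv := fun y => Subtype.ext (block_code_involutive h1 h2 hs hH y.2)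
            right_inv := fun y => Subtype.ext (block_code_involutive h1 h2 hs hH y.2)
            continuous_toFun := hcont.restrict M12
            continuous_invFun := hcont.restrict M21 }, fun y _ => hs y⟩
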